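/- Let G be a commutative group, N ≤ G a submonoid, b ∈ N, ℓ ∈ ℕ, and Ω ⊆ Z_{N,ℓ}(b) infinite. If S is a maximal element of the poset 𝒮_Ω(N,G) of Ω-admissible submonoids between N and G under ≼, then the subgroup of G generated by S is all of G: Subgroup.closure (S : Set G) = ⊤ (equivalently, ∀ g ∈ G, ∃ x ∈ S, ∃ y ∈ S, g * x = y). Consequently S is an undermonoid of G. -/

import Mathlib

/-- The set of factorizations of `b` in the submonoid `S` of the group `G`. -/
def ZSet {G : Type*} [CommGroup G] (S : Submonoid G) (b : S) :
    Set (Multiset (Associates S)) :=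
  {z | (∀ a ∈ z, Irreducible a) ∧ z.prod = Associates.mk b}

/-- The set of length-`ℓ` factorizations of `b` in `S`. -/
def ZSetLen {G : Type*} [CommGroup G] (S : Submonoid G) (b : S) (ℓ : ℕ) :
    Set (Multiset (Associates S)) :=
  {z ∈ ZSet S b | Multiset.card z = ℓ}

/-- `u` is a unit of the submonoid `S` of the group `G`: `u⁻¹ ∈ S`. -/
def IsUnitIn {G : Type*} [CommGroup G] (S : Submonoid G) (u : G) : Prop :=
  u⁻¹ ∈ S

/-- `S` is unit-reflecting over `N`. -/
def UnitReflecting {G : Type*} [CommGroup G] (N S : Submonoid G) : Prop :=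
  ∀ u ∈ S, IsUnitIn S u → ∀ x ∈ N, ∀ y ∈ N, u * y = x → u ∈ N ∧ IsUnitIn N u

/-- `S` is `Ω`-admissible over `N`: `N ≤ S`, `S` is unit-reflecting over `N`, and
every `a ∈ N` whose class in `Associates ↥N` occurs in some `z ∈ Ω` has irreducible
class in `Associates ↥S`. -/
def OmegaAdmissible {G : Type*} [CommGroup G] (N S : Submonoid G)
    (Ω : Set (Multiset (Associates N))) : Prop :=
  N ≤ S ∧ UnitReflecting N S ∧
    ∀ (a : G) (haN : a ∈ N) (haS : a ∈ S),
      (∃ z ∈ Ω, Associates.mk (⟨a, haN⟩ : N) ∈ z) →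
        Irreducible (Associates.mk (⟨a, haS⟩ : S))

/-- The survival order: `S₁ ≼ S₂` iff `S₁ ≤ S₂` and every element of `S₁` that is a
unit of `↥S₂` is a unit of `↥S₁`. -/
def Prec {G : Type*} [CommGroup G] (S₁ S₂ : Submonoid G) : Prop :=
  S₁ ≤ S₂ ∧ ∀ u ∈ S₁, IsUnitIn S₂ u → IsUnitIn S₁ u

lemma isUnit_sub_iff {G : Type*} [CommGroup G] (S : Submonoid G) (a : G) (ha : a ∈ S) :
    IsUnit (⟨a, ha⟩ : S) ↔ a⁻¹ ∈ S := by
  rw [isUnit_iff_exists_inv]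
  constructor
  · rintro ⟨⟨c, hc⟩, h⟩
    have h1 : a * c = 1 := congrArg Subtype.val h
    rwa [inv_eq_of_mul_eq_one_right h1]
  · intro h
    exact ⟨⟨a⁻¹, h⟩, Subtype.ext (mul_inv_cancel a)⟩

lemma irreducible_mk_comm {M : Type*} [CommMonoid M] (a : M) :
    Irreducible (Associates.mk a) ↔ Irreducible a := by
  rw [irreducible_iff, Associates.isUnit_mk]
  constructor
  · rintro ⟨h1, h2⟩
    refine ⟨h1, fun x y e => ?_⟩
    have := h2 (a := Associates.mk x) (b := Associates.mk y) (by rw [e, Associates.mk_mul_mk])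
    rwa [Associates.isUnit_mk, Associates.isUnit_mk] at this
  · intro h
    refine ⟨h.not_isUnit, fun x y e => ?_⟩
    obtain ⟨x, rfl⟩ := Associates.mk_surjective x
    obtain ⟨y, rfl⟩ := Associates.mk_surjective y
    rw [Associates.mk_mul_mk, Associates.mk_eq_mk_iff_associated] at e
    rw [Associates.isUnit_mk, Associates.isUnit_mk]
    exact (e.irreducible h).isUnit_or_isUnit rfl

lemma irreducible_sub_iff {G : Type*} [CommGroup G] (S : Submonoid G) (a : G) (ha : a ∈ S) :
    Irreducible (Associates.mk (⟨a, ha⟩ : S)) ↔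
      a⁻¹ ∉ S ∧ ∀ x ∈ S, ∀ y ∈ S, a = x * y → x⁻¹ ∈ S ∨ y⁻¹ ∈ S := by
  rw [irreducible_mk_comm, irreducible_iff, isUnit_sub_iff]
  refine and_congr Iff.rfl ⟨fun h x hx y hy e => ?_, fun h x y e => ?_⟩
  · have := h (a := ⟨x, hx⟩) (b := ⟨y, hy⟩) (Subtype.ext e)
    rwa [isUnit_sub_iff, isUnit_sub_iff] at this
  · obtain ⟨x, hx⟩ := x
    obtain ⟨y, hy⟩ := y
    rw [isUnit_sub_iff, isUnit_sub_iff]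
    exact h x hx y hy (congrArg Subtype.val e)

/-- The subgroup of fractions of `S`. -/
def fracs {G : Type*} [CommGroup G] (S : Submonoid G) : Subgroup G where
  carrier := {g | ∃ x ∈ S, ∃ y ∈ S, g * x = y}
  one_mem' := ⟨1, S.one_mem, 1, S.one_mem, by simp⟩
  mul_mem' := by
    rintro a c ⟨x, hx, y, hy, h⟩ ⟨x', hx', y', hy', h'⟩
    exact ⟨x * x', S.mul_mem hx hx', y * y', S.mul_mem hy hy', by
      rw [← h, ← h', mul_mul_mul_comm]⟩
  inv_mem' := by
    rintro a ⟨x, hx, y, hy, h⟩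
    exact ⟨y, hy, x, hx, by rw [← h]; simp⟩

lemma le_fracs {G : Type*} [CommGroup G] (S : Submonoid G) {s : G} (hs : s ∈ S) :
    s ∈ fracs S := ⟨1, S.one_mem, s, hs, by simp⟩

lemma exists_good {G : Type*} [CommGroup G] (S : Submonoid G) (d : G) (hd : d ∈ S)
    (g : G) (hg : g ∉ fracs S) :
    ∃ h, h ∉ fracs S ∧ ∀ n, 0 < n → h ^ n ∈ fracs S → ∃ r ∈ S, h ^ n = d * (d * r) := by
  by_cases hp : ∃ p, 0 < p ∧ g ^ p ∈ fracs S
  · classical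
    let q : G ⧸ fracs S := QuotientGroup.mk g
    have key : ∀ n, g ^ n ∈ fracs S ↔ orderOf q ∣ n := by
      intro n
      rw [orderOf_dvd_iff_pow_eq_one, ← QuotientGroup.mk_pow, QuotientGroup.eq_one_iff]
    obtain ⟨m, hm⟩ : ∃ m, orderOf q = m + 2 := by
      obtain ⟨p, hp0, hp⟩ := hp
      have h0 : orderOf q ≠ 0 := by
        intro h0
        rw [key, h0, zero_dvd_iff] at hp
        omega
      have h1 : orderOf q ≠ 1 := by
        intro h1
        apply hg
        have := (key 1).2 (by rw [h1])
        simpa using this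
      exact ⟨orderOf q - 2, by omega⟩
    rw [hm] at key
    obtain ⟨y, hy, x, hx, e⟩ := (key (m + 2)).2 dvd_rfl
    have hyd : y * d ∈ fracs S := le_fracs S (S.mul_mem hy hd)
    refine ⟨g * (y * d), fun h => hg ((Subgroup.mul_mem_cancel_right _ hyd).1 h), ?_⟩
    intro n hn h
    rw [mul_pow, Subgroup.mul_mem_cancel_right _ (Subgroup.pow_mem _ hyd n), key] at h
    obtain ⟨k, rfl⟩ := h
    obtain ⟨k, rfl⟩ : ∃ j, k = j + 1 := ⟨k - 1, by
      have : k ≠ 0 := by rintro rfl; simp at hn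
      omega⟩
    have hc : (g * (y * d)) ^ (m + 2) = d * (d * (x * y ^ (m + 1) * d ^ m)) := by
      rw [← e, mul_pow, mul_pow, pow_succ y (m + 1), pow_succ d (m + 1), pow_succ d m]
      simp only [mul_comm, mul_left_comm, mul_assoc]
    have hr : x * y ^ (m + 1) * d ^ m ∈ S :=
      S.mul_mem (S.mul_mem hx (S.pow_mem hy _)) (S.pow_mem hd _)
    refine ⟨(x * y ^ (m + 1) * d ^ m) * (d * (d * (x * y ^ (m + 1) * d ^ m))) ^ k,
      S.mul_mem hr (S.pow_mem (S.mul_mem hd (S.mul_mem hd hr)) _), ?_⟩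
    rw [pow_mul, hc, pow_succ, mul_comm]
    simp only [mul_assoc]
  · exact ⟨g, hg, fun n hn h => absurd ⟨n, hn, h⟩ hp⟩

/-- A maximal element of the survival poset generates the whole group: if `S` is a
maximal element of the poset of `Ω`-admissible submonoids under `≼`, with
`Ω ⊆ Z_{N,ℓ}(b)` infinite, then the subgroup generated by `S` is all of `G`;
consequently `S` is an undermonoid of `G`. -/
theorem maximal_is_undermonoid {G : Type*} [CommGroup G] (N S : Submonoid G)
    (b : G) (hb : b ∈ N) (ℓ : ℕ) (Ω : Set (Multiset (Associates N)))
    (hΩ : Ω ⊆ ZSetLen N ⟨b, hb⟩ ℓ) (hinf : Ω.Infinite)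
    (hadm : OmegaAdmissible N S Ω)
    (hmax : ∀ T : Submonoid G, OmegaAdmissible N T Ω → Prec S T → T = S) :
    Subgroup.closure (S : Set G) = ⊤ ∧ ∀ g : G, ∃ x ∈ S, ∃ y ∈ S, g * x = y := by
  suffices key : ∀ g : G, g ∈ fracs S by
    refine ⟨?_, key⟩
    rw [eq_top_iff]
    rintro g -
    obtain ⟨x, hx, y, hy, e⟩ := key g
    rw [← Subgroup.mul_mem_cancel_right _ (Subgroup.subset_closure hx), e]
    exact Subgroup.subset_closure hy
  obtain ⟨hNS, hur, hirr⟩ := hadm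
  obtain ⟨d, hd, hdu⟩ : ∃ d ∈ S, d⁻¹ ∉ S := by
    obtain ⟨z, hz, hz0⟩ := hinf.exists_notMem_finset {0}
    obtain ⟨c, hc⟩ := Multiset.exists_mem_of_ne_zero (by simpa using hz0)
    obtain ⟨⟨a, ha⟩, rfl⟩ := Associates.mk_surjective c
    exact ⟨a, hNS ha, ((irreducible_sub_iff S a _).1 (hirr a ha (hNS ha) ⟨z, hz, hc⟩)).1⟩
  intro g
  by_contra hg
  obtain ⟨h, hh, hpow⟩ := exists_good S d hd g hg
  have hST : S ≤ S ⊔ Submonoid.powers h := le_sup_left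
  have memT : ∀ u ∈ S ⊔ Submonoid.powers h, ∃ n : ℕ, ∃ s ∈ S, u = h ^ n * s := by
    intro u hu
    obtain ⟨s, hs, w, ⟨n, rfl⟩, rfl⟩ := Submonoid.mem_sup.1 hu
    exact ⟨n, s, hs, mul_comm _ _⟩
  have prodT : ∀ u ∈ S ⊔ Submonoid.powers h, ∀ v ∈ S ⊔ Submonoid.powers h, u * v ∈ S →
      (u ∈ S ∧ v ∈ S) ∨ ∃ r ∈ S, u * v = d * (d * r) := by
    intro u hu v hv huv
    obtain ⟨n, s, hs, rfl⟩ := memT u hu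
    obtain ⟨m, t, ht, rfl⟩ := memT v hv
    have e : h ^ n * s * (h ^ m * t) = h ^ (n + m) * (s * t) := by
      rw [pow_add, mul_mul_mul_comm]
    rcases Nat.eq_zero_or_pos (n + m) with h0 | h0
    · obtain ⟨rfl, rfl⟩ : n = 0 ∧ m = 0 := by omega
      left
      simpa using ⟨hs, ht⟩
    · right
      rw [e] at huv ⊢
      have hk := (Subgroup.mul_mem_cancel_right _ (le_fracs S (S.mul_mem hs ht))).1
        (le_fracs S huv)
      obtain ⟨r, hr, er⟩ := hpow _ h0 hk
      exact ⟨r * (s * t), S.mul_mem hr (S.mul_mem hs ht), by rw [er]; simp only [mul_assoc]⟩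
  have unitT : ∀ u ∈ S ⊔ Submonoid.powers h, u⁻¹ ∈ S ⊔ Submonoid.powers h →
      u ∈ S ∧ u⁻¹ ∈ S := by
    intro u hu hu'
    rcases prodT u hu _ hu' (by simp [S.one_mem]) with h1 | ⟨r, hr, e⟩
    · exact h1
    · rw [mul_inv_cancel] at e
      exact absurd (by rw [inv_eq_of_mul_eq_one_right e.symm]; exact S.mul_mem hd hr) hdu
  have hTS := hmax (S ⊔ Submonoid.powers h) ⟨hNS.trans hST, ?_, ?_⟩
    ⟨hST, fun u hu hu' => (unitT u (hST hu) hu').2⟩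
  · apply hh
    apply le_fracs
    rw [← hTS]
    exact (le_sup_right : Submonoid.powers h ≤ _) (Submonoid.mem_powers h)
  · intro u hu hu' x hx y hy e
    exact hur u (unitT u hu hu').1 (unitT u hu hu').2 x hx y hy e
  · intro a haN haT hz
    obtain ⟨hnu, hir⟩ := (irreducible_sub_iff S a _).1 (hirr a haN (hNS haN) hz)
    rw [irreducible_sub_iff]
    refine ⟨fun h1 => hnu (unitT a haT h1).2, ?_⟩
    rintro x hx y hy rfl
    rcases prodT x hx y hy (hNS haN) with ⟨h1, h2⟩ | ⟨r, hr, e⟩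
    · exact (hir x h1 y h2 rfl).imp (fun h => hST h) (fun h => hST h)
    · exfalso
      rcases hir d hd (d * r) (S.mul_mem hd hr) e with h1 | h1
      · exact hdu h1
      · apply hdu
        have := S.mul_mem hr h1
        simpa using this
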